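/- arXiv:2103.12251 — 4 statements merged into one kernel-verified Lean document; each statement's English description precedes it below -/
import Mathlib

section
/- Let Col : ℤ_+ → ℤ_+ be the Collatz map, Col(n) = 3n + 1 if n is odd and Col(n) = n/2 if n is even. For any positive integer n, define α_0 = n and α_{i+1} = Col(α_i) for i ≥ 0. Then in the ring ℤ₂ of 2-adic integers, −n = Σ_{i ≥ 0, α_i odd} (5α_i + 2)·2^i, where the series on the right converges in ℤ₂. -/
/-!
The series telescopes. If `α i` is odd then `2 * α (i + 1) - α i = 5 * α i + 2`, and if `α i` is
even then `2 * α (i + 1) - α i = 0`; so the `i`-th summand is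
`2 ^ (i + 1) * α (i + 1) - 2 ^ i * α i` in either case. The `N`-th partial sum is therefore
`2 ^ N * α N - n`, which tends to `-n` because `2 ^ N` tends to `0` in `ℤ_[2]` and `α N` has
norm at most one.
-/

/-- The Collatz map on positive integers: `Col n = 3n + 1` if `n` is odd, `n / 2` otherwise. -/
def Col (n : ℕ) : ℕ := if Odd n then 3 * n + 1 else n / 2

open Finset in
/-- **Corollary 5 (2-adic correspondence).** For the Collatz orbit `α₀ = n`,
`α_{i+1} = Col(αᵢ)` of a positive integer `n`, in the 2-adic integers
`-n = ∑_{i : αᵢ odd} (5αᵢ + 2)·2ⁱ`, the series being convergent in `ℤ₂`. -/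
theorem dyadic_correspondence
    (n : ℕ) (hn : 0 < n) (α : ℕ → ℕ) (h0 : α 0 = n)
    (hstep : ∀ i, α (i + 1) = Col (α i)) :
    Summable (fun i : ℕ =>
      (if Odd (α i) then ((5 * α i + 2 : ℕ) : ℤ_[2]) else 0) * (2 : ℤ_[2]) ^ i)
    ∧ -(n : ℤ_[2]) = ∑' i : ℕ,
      (if Odd (α i) then ((5 * α i + 2 : ℕ) : ℤ_[2]) else 0) * (2 : ℤ_[2]) ^ i := by
  have hpow : ∀ i : ℕ, ‖(2 : ℤ_[2]) ^ i‖ = (1 / 2 : ℝ) ^ i := fun i => by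
    have h := PadicInt.norm_p (p := 2)
    push_cast at h
    rw [norm_pow, h, one_div]
  -- 2-adic integers have norm at most one, so the summands are dominated by a geometric series.
  have hsum : Summable (fun i : ℕ =>
      (if Odd (α i) then ((5 * α i + 2 : ℕ) : ℤ_[2]) else 0) * (2 : ℤ_[2]) ^ i) := by
    refine Summable.of_norm_bounded summable_geometric_two fun i => ?_
    rw [norm_mul, hpow]
    exact mul_le_of_le_one_left (by positivity) (PadicInt.norm_le_one _)
  have hpartial : ∀ N : ℕ, ∑ i ∈ range N,
      (if Odd (α i) then ((5 * α i + 2 : ℕ) : ℤ_[2]) else 0) * (2 : ℤ_[2]) ^ i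
        = (α N : ℤ_[2]) * 2 ^ N - n := by
    intro N
    induction N with
    | zero => simp [h0]
    | succ N ih =>
      rw [sum_range_succ, ih, hstep, Col]
      split_ifs with h
      · push_cast
        ring
      · have h2 : α N = 2 * (α N / 2) := by
          rw [Nat.not_odd_iff] at h
          omega
        have h3 : (α N : ℤ_[2]) = 2 * ((α N / 2 : ℕ) : ℤ_[2]) := by exact_mod_cast h2
        rw [h3]
        ring
  have hrem : Filter.Tendsto (fun N : ℕ => (α N : ℤ_[2]) * 2 ^ N) Filter.atTop (nhds 0) := by
    refine squeeze_zero_norm (fun N => ?_)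
      (tendsto_pow_atTop_nhds_zero_of_lt_one (r := (1 / 2 : ℝ)) (by norm_num) (by norm_num))
    rw [norm_mul, hpow]
    exact mul_le_of_le_one_left (by positivity) (PadicInt.norm_le_one _)
  refine ⟨hsum, tendsto_nhds_unique ?_ hsum.hasSum.tendsto_sum_nat⟩
  simp_rw [hpartial]
  simpa using hrem.sub_const (n : ℤ_[2])
end

section
/- Let Col : ℤ_+ → ℤ_+ be the Collatz map, Col(n) = 3n + 1 if n is odd and Col(n) = n/2 if n is even. Suppose (α_0,…,α_{m−1}) is a Col-cycle, i.e. α_{i+1} = Col(α_i) and α_{i+m} = α_i for all i ≥ 0. Then for every j ∈ {0,…,m−1}, the identity α_j·(2^m − 1) = Σ_{0 ≤ i ≤ m−1, α_{i+j} odd} (5α_{i+j} + 2)·2^i holds in ℤ. -/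
lemma two_mul_Col_sub (n : ℕ) :
    2 * (Col n : ℤ) - n = if Odd n then 5 * (n : ℤ) + 2 else 0 := by
  unfold Col
  split_ifs with h
  · push_cast
    ring
  · have := Nat.not_odd_iff_even.mp h
    have : 2 * (n / 2) = n := Nat.two_mul_div_two_of_even this
    omega

open Finset in
/-- **Corollary 6.** For a Collatz cycle `(α₀, …, α_{m-1})` of positive integers and every
`j ∈ {0, …, m-1}`, the identity `αⱼ·(2ᵐ - 1) = ∑_{i : α_{i+j} odd} (5α_{i+j} + 2)·2ⁱ`
holds in `ℤ`. -/
theorem collatz_cycle_int_representation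
    (m : ℕ) (hm : 0 < m) (α : ℕ → ℕ) (hpos : ∀ i, 0 < α i)
    (hstep : ∀ i, α (i + 1) = Col (α i))
    (hcyc : ∀ i, α (i + m) = α i) :
    ∀ j < m, (α j : ℤ) * (2 ^ m - 1) =
      ∑ i ∈ (Finset.range m).filter (fun i => Odd (α (i + j))),
        (5 * (α (i + j) : ℤ) + 2) * 2 ^ i := by
  intro j _
  have hterm : ∀ i ∈ Finset.range m,
      (if Odd (α (i + j)) then (5 * (α (i + j) : ℤ) + 2) * 2 ^ i else 0) =
        2 ^ (i + 1) * (α (i + 1 + j) : ℤ) - 2 ^ i * (α (i + j) : ℤ) := by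
    intro i _
    have h := two_mul_Col_sub (α (i + j))
    rw [← hstep, show i + j + 1 = i + 1 + j by ring] at h
    rw [← zero_mul ((2 : ℤ) ^ i), ← ite_mul, ← h]
    ring
  rw [Finset.sum_filter, Finset.sum_congr rfl hterm,
    Finset.sum_range_sub (fun i => 2 ^ i * (α (i + j) : ℤ)), Nat.add_comm m j, hcyc, Nat.zero_add]
  ring
end

section
/- Let Col : ℤ_+ → ℤ_+ be the Collatz map, Col(n) = 3n + 1 if n is odd and Col(n) = n/2 if n is even. Suppose (α_0,…,α_{m−1}) is a Col-cycle, i.e. α_{i+1} = Col(α_i) and α_{i+m} = α_i for all i ≥ 0. Then S = 5·S_odd + 2·N_odd, where S = Σ_{i=0}^{m−1} α_i is the sum of all terms of the cycle, S_odd is the sum of the odd terms α_i with 0 ≤ i ≤ m−1, and N_odd is the number of indices 0 ≤ i ≤ m−1 with α_i odd. Equivalently, Σ_{i=0}^{m−1} α_i = Σ_{0 ≤ i ≤ m−1, α_i odd} (5α_i + 2). -/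
open Finset in
/-- **Corollary 7 / Equation (1).** For a Collatz cycle `(α₀, …, α_{m-1})` of positive
integers, `S = 5·S_odd + 2·N_odd`, i.e. `∑ αᵢ = ∑_{αᵢ odd} (5αᵢ + 2)`. -/
theorem collatz_cycle_sum
    (m : ℕ) (hm : 0 < m) (α : ℕ → ℕ) (hpos : ∀ i, 0 < α i)
    (hstep : ∀ i, α (i + 1) = Col (α i))
    (hcyc : ∀ i, α (i + m) = α i) :
    ∑ i ∈ Finset.range m, α i =
      5 * (∑ i ∈ (Finset.range m).filter (fun i => Odd (α i)), α i)
        + 2 * ((Finset.range m).filter (fun i => Odd (α i))).card := by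
  -- Each step satisfies `2 * α (i + 1) = α i + (5 * α i + 2 if α i is odd, else 0)`;
  -- summing over `i < k` and telescoping gives the identity below, whose boundary terms
  -- cancel at `k = m`.
  have key : ∀ k, ∑ i ∈ Finset.range k, α i + 2 * α k =
      5 * (∑ i ∈ (Finset.range k).filter (fun i => Odd (α i)), α i)
        + 2 * ((Finset.range k).filter (fun i => Odd (α i))).card + 2 * α 0 := by
    intro k
    induction k with
    | zero => simp
    | succ k ih =>
      have hs := hstep k
      rw [Finset.sum_range_succ, Finset.range_add_one, Finset.filter_insert]
      by_cases h : Odd (α k)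
      · rw [Col, if_pos h] at hs
        rw [if_pos h, Finset.sum_insert (by simp), Finset.card_insert_of_notMem (by simp)]
        omega
      · rw [Col, if_neg h] at hs
        rw [if_neg h]
        rw [Nat.not_odd_iff] at h
        omega
  have hk := key m
  have h0 := hcyc 0
  rw [zero_add] at h0
  omega
end

section
/- Let Col : ℤ_+ → ℤ_+ be the Collatz map, Col(n) = 3n + 1 if n is odd and Col(n) = n/2 if n is even. Let n be a positive integer and suppose ℓ ≥ 0 is such that the orbit n, Col(n), Col²(n), …, Col^ℓ(n) ends at Col^ℓ(n) = 2. Writing S = Σ_{i=0}^{ℓ} Col^i(n) for the sum of the terms of this orbit, S_odd for the sum of the odd terms Col^i(n) with 0 ≤ i ≤ ℓ, and N_odd for the number of indices 0 ≤ i ≤ ℓ with Col^i(n) odd, one has S − (5·S_odd + 2·N_odd) = 2·(n − 1). -/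
/-- The local identity that makes the orbit sum telescope. -/
theorem Col_local_identity (x : ℕ) :
    (x : ℤ) - (if Odd x then 5 * (x : ℤ) + 2 else 0) = 2 * x - 2 * Col x := by
  unfold Col
  split_ifs with h
  · push_cast
    ring
  · rw [Nat.not_odd_iff_even] at h
    obtain ⟨k, rfl⟩ := h
    omega

open Finset in
/-- **Theorem 6.** If the orbit `n, Col(n), …, Col^ℓ(n)` of a positive integer `n` ends at
`Col^ℓ(n) = 2`, then `S - (5·S_odd + 2·N_odd) = 2·(n - 1)`, where `S`, `S_odd`, `N_odd`
are the sum of all terms, the sum of the odd terms, and the number of odd terms of the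
orbit, respectively. -/
theorem collatz_orbit_to_two
    (n : ℕ) (hn : 0 < n) (ℓ : ℕ) (hend : Col^[ℓ] n = 2) :
    (∑ i ∈ Finset.range (ℓ + 1), (Col^[i] n : ℤ))
      - (5 * (∑ i ∈ (Finset.range (ℓ + 1)).filter (fun i => Odd (Col^[i] n)),
          (Col^[i] n : ℤ))
        + 2 * (((Finset.range (ℓ + 1)).filter (fun i => Odd (Col^[i] n))).card : ℤ))
      = 2 * ((n : ℤ) - 1) := by
  have htel : ∀ m : ℕ, (∑ i ∈ Finset.range m, ((2 : ℤ) * Col^[i] n - 2 * Col^[i + 1] n))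
      = 2 * n - 2 * Col^[m] n := fun m =>
    Finset.sum_range_sub' (fun i => (2 : ℤ) * Col^[i] n) m
  have hlast : Col^[ℓ + 1] n = 1 := by
    rw [Function.iterate_succ_apply', hend]
    decide
  have hsum := htel (ℓ + 1)
  simp only [Function.iterate_succ_apply' Col, ← Col_local_identity] at hsum
  rw [← Function.iterate_succ_apply' Col, hlast, Finset.sum_sub_distrib, ← Finset.sum_filter,
    Finset.sum_add_distrib, ← Finset.mul_sum, Finset.sum_const, nsmul_eq_mul] at hsum
  push_cast at hsum
  linarith
end
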